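/- arXiv:0710.0705 — 4 statements merged into one kernel-verified Lean document; each statement's English description precedes it below -/
import Mathlib

section
/- Let N be a positive integer and let Γ(N) = {g ∈ SL(2,ℤ) : g ≡ 1 (mod N)} be the principal congruence subgroup of level N, acting on ℤ² by matrix–vector multiplication. Two nonzero lattice points (m,l), (m',l') ∈ ℤ² lie in the same Γ(N)-orbit if and only if t := gcd(m,l) equals gcd(m',l') and m/t ≡ m'/t (mod N) and l/t ≡ l'/t (mod N). -/
open Matrix

/-!
`SL₂` preserves gcds, so after dividing by the common gcd only vectors `v`, `w` with coprime entries
remain. If `v ≡ w`, choose `A ∈ SL₂` with first column `v`; since the congruence subgroup is normal,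
applying `A⁻¹` reduces further to `v = (1, 0)`. A coprime pair `(a, b) ≡ (1, 0)` is then completed
to an `SL₂`-matrix congruent to the identity by correcting the second column of any completion by a
multiple of the first.
-/

open scoped MatrixGroups

section CongruenceKernel

variable {n R S : Type*} [Fintype n] [DecidableEq n] [CommRing R] [CommRing S]

/-- The principal congruence subgroup of a ring homomorphism `f : R →+* S`: the special linear
matrices over `R` that `f` maps to the identity. It generalises `Γ(N)` to arbitrary reductions. -/
def congruenceKernel (n : Type*) [Fintype n] [DecidableEq n] (f : R →+* S) :
    Subgroup (SpecialLinearGroup n R) :=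
  (SpecialLinearGroup.map f).ker

lemma congruenceKernel_intCastRingHom (N : ℕ) :
    congruenceKernel (Fin 2) (Int.castRingHom (ZMod N)) = CongruenceSubgroup.Gamma N :=
  rfl

instance congruenceKernel.normal (f : R →+* S) : (congruenceKernel n f).Normal :=
  MonoidHom.normal_ker _

lemma comp_specialLinearGroup_smul (f : R →+* S) (g : SpecialLinearGroup n R) (v : n → R) :
    f ∘ (g • v) = SpecialLinearGroup.map f g • (f ∘ v) :=
  funext fun i ↦ RingHom.map_mulVec f g.1 v i

lemma comp_smul_of_mem_congruenceKernel {f : R →+* S} {g : SpecialLinearGroup n R}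
    (hg : g ∈ congruenceKernel n f) (v : n → R) : f ∘ (g • v) = f ∘ v := by
  rw [comp_specialLinearGroup_smul, MonoidHom.mem_ker.mp hg, one_smul]

lemma specialLinearGroup_smul_single_one (g : SpecialLinearGroup n R) (j : n) :
    g • (Pi.single j 1 : n → R) = g.1.col j :=
  mulVec_single_one g.1 j

end CongruenceKernel

section CoprimeVectors

variable {R S : Type*} [CommRing R] [CommRing S]

lemma exists_smul_single_eq {v : Fin 2 → R} (hv : IsCoprime (v 0) (v 1)) :
    ∃ A : SL(2, R), A • Pi.single 0 1 = v := by
  obtain ⟨A, hA₀, hA₁⟩ := hv.exists_SL2_col 0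
  refine ⟨A, (specialLinearGroup_smul_single_one A 0).trans ?_⟩
  exact funext (Fin.forall_fin_two.mpr ⟨hA₀, hA₁⟩)

lemma exists_mem_congruenceKernel_smul_single_eq {f : R →+* S} {v : Fin 2 → R}
    (hv : IsCoprime (v 0) (v 1)) (hfv : f ∘ v = Pi.single 0 1) :
    ∃ g ∈ congruenceKernel (Fin 2) f, g • Pi.single 0 1 = v := by
  obtain ⟨x, y, hxy⟩ := hv
  have hf₀ : f (v 0) = 1 := congrFun hfv 0
  have hf₁ : f (v 1) = 0 := congrFun hfv 1
  have hfx : f x = 1 := by simpa [hf₀, hf₁] using congrArg f hxy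
  -- The second column is `(-y, x) + y • v`.
  let g : SL(2, R) := ⟨!![v 0, -y + y * v 0; v 1, x + y * v 1], by
    rw [det_fin_two_of]
    linear_combination hxy⟩
  refine ⟨g, MonoidHom.mem_ker.mpr ?_, (specialLinearGroup_smul_single_one g 0).trans ?_⟩
  · ext i j
    rw [SpecialLinearGroup.map_apply_coe, RingHom.mapMatrix_apply, map_apply]
    fin_cases i <;> fin_cases j <;> simp [g, hf₀, hf₁, hfx]
  · exact funext (Fin.forall_fin_two.mpr ⟨rfl, rfl⟩)

lemma exists_mem_congruenceKernel_smul_eq_iff {f : R →+* S} {v w : Fin 2 → R}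
    (hv : IsCoprime (v 0) (v 1)) (hw : IsCoprime (w 0) (w 1)) :
    (∃ g ∈ congruenceKernel (Fin 2) f, g • v = w) ↔ f ∘ v = f ∘ w := by
  constructor
  · rintro ⟨g, hg, rfl⟩
    exact (comp_smul_of_mem_congruenceKernel hg v).symm
  · intro hvw
    obtain ⟨A, rfl⟩ := exists_smul_single_eq hv
    have hred : f ∘ (A⁻¹ • w) = Pi.single 0 1 := by
      rw [comp_specialLinearGroup_smul, ← hvw, ← comp_specialLinearGroup_smul, inv_smul_smul]
      exact funext (Fin.forall_fin_two.mpr (by simp))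
    obtain ⟨g, hg, hgw⟩ := exists_mem_congruenceKernel_smul_single_eq (hw.mulVecSL A⁻¹) hred
    refine ⟨A * g * A⁻¹, (congruenceKernel.normal f).conj_mem g hg A, ?_⟩
    rw [mul_smul, mul_smul, inv_smul_smul, hgw]
    exact smul_inv_smul A w

end CoprimeVectors

section GCD

lemma dvd_mulVec_apply {m n R : Type*} [Fintype n] [CommSemiring R] {d : R} {v : n → R}
    (hd : ∀ j, d ∣ v j) (A : Matrix m n R) (i : m) : d ∣ (A *ᵥ v) i :=
  Finset.dvd_sum fun j _ ↦ (hd j).mul_left (A i j)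

lemma gcd_dvd_gcd_mulVec {R : Type*} [CommSemiring R] [GCDMonoid R]
    (A : Matrix (Fin 2) (Fin 2) R) (v : Fin 2 → R) :
    gcd (v 0) (v 1) ∣ gcd ((A *ᵥ v) 0) ((A *ᵥ v) 1) := by
  have hd : ∀ j, gcd (v 0) (v 1) ∣ v j :=
    Fin.forall_fin_two.mpr ⟨gcd_dvd_left _ _, gcd_dvd_right _ _⟩
  exact dvd_gcd (dvd_mulVec_apply hd A 0) (dvd_mulVec_apply hd A 1)

lemma gcd_specialLinearGroup_smul {R : Type*} [CommRing R] [NormalizedGCDMonoid R]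
    (g : SL(2, R)) (v : Fin 2 → R) :
    gcd ((g • v) 0) ((g • v) 1) = gcd (v 0) (v 1) := by
  refine dvd_antisymm_of_normalize_eq (normalize_gcd _ _) (normalize_gcd _ _) ?_
    (gcd_dvd_gcd_mulVec g.1 v)
  have hinv : g⁻¹.1 *ᵥ (g • v) = v := inv_smul_smul g v
  simpa only [hinv] using gcd_dvd_gcd_mulVec g⁻¹.1 (g • v)

end GCD

lemma smul_div_div_of_dvd {R : Type*} [EuclideanDomain R] {t x y : R} (ht : t ≠ 0)
    (hx : t ∣ x) (hy : t ∣ y) : t • ![x / t, y / t] = ![x, y] := by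
  simp [EuclideanDomain.mul_div_cancel' ht hx, EuclideanDomain.mul_div_cancel' ht hy]

theorem gamma_orbit_iff_general {R S : Type*} [EuclideanDomain R] [NormalizedGCDMonoid R]
    [CommRing S] (f : R →+* S) (m l m' l' : R) (h : (m, l) ≠ (0, 0)) :
    (∃ g ∈ congruenceKernel (Fin 2) f, g • ![m, l] = ![m', l']) ↔
      gcd m l = gcd m' l' ∧
        f (m / gcd m l) = f (m' / gcd m l) ∧ f (l / gcd m l) = f (l' / gcd m l) := by
  have gcd_eq_of_orbit : (∃ g ∈ congruenceKernel (Fin 2) f, g • ![m, l] = ![m', l']) →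
      gcd m l = gcd m' l' := by
    rintro ⟨g, -, hg⟩
    simpa [hg] using (gcd_specialLinearGroup_smul g ![m, l]).symm
  rw [← and_iff_right_of_imp gcd_eq_of_orbit, and_congr_right_iff]
  intro hgcd
  have ht : gcd m l ≠ 0 := by simpa [gcd_eq_zero_iff] using h
  have hv := isCoprime_div_gcd_div_gcd_of_gcd_ne_zero ht
  have hw := isCoprime_div_gcd_div_gcd_of_gcd_ne_zero (hgcd ▸ ht)
  rw [← hgcd] at hw
  rw [← smul_div_div_of_dvd ht (gcd_dvd_left m l) (gcd_dvd_right m l),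
    ← smul_div_div_of_dvd ht (hgcd.dvd.trans (gcd_dvd_left m' l'))
      (hgcd.dvd.trans (gcd_dvd_right m' l'))]
  simp only [smul_comm _ (gcd m l), (smul_right_injective (Fin 2 → R) ht).eq_iff]
  rw [exists_mem_congruenceKernel_smul_eq_iff hv hw]
  simp [funext_iff, Fin.forall_fin_two]

/-- Two nonzero lattice points `(m,l)` and `(m',l')` lie in the same orbit
under the principal congruence subgroup `Γ(N)` (acting by matrix–vector multiplication)
if and only if `t := gcd(m,l)` equals `gcd(m',l')` and `m/t ≡ m'/t (mod N)` and
`l/t ≡ l'/t (mod N)`. -/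
theorem gamma_orbit_iff (N : ℕ) (hN : 0 < N) (m l m' l' : ℤ)
    (h : (m, l) ≠ (0, 0)) (h' : (m', l') ≠ (0, 0)) :
    (∃ g ∈ CongruenceSubgroup.Gamma N,
        (g : Matrix (Fin 2) (Fin 2) ℤ) *ᵥ ![m, l] = ![m', l']) ↔
      Int.gcd m l = Int.gcd m' l' ∧
        Int.ModEq (N : ℤ) (m / (Int.gcd m l : ℤ)) (m' / (Int.gcd m l : ℤ)) ∧
        Int.ModEq (N : ℤ) (l / (Int.gcd m l : ℤ)) (l' / (Int.gcd m l : ℤ)) := by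
  simpa only [congruenceKernel_intCastRingHom, Matrix.SpecialLinearGroup.smul_def, smul_eq_mulVec,
    eq_intCast, ZMod.intCast_eq_intCast_iff, ← Int.coe_gcd, Nat.cast_inj] using
    gamma_orbit_iff_general (Int.castRingHom (ZMod N)) m l m' l' h
end

section
/- Fix a positive integer N and let ∼ denote the smallest congruence relation on ℤ² satisfying: (i) (m,l) ∼ 𝔱^N·(m,l) for all (m,l), where 𝔱 = (1 1; 0 1); and (ii) (m,l) ∼ (m,kl) for every k ∈ ℤ with k ≡ 1 (mod N) and gcd(m,kl) = gcd(m,l). (Here a congruence relation is an equivalence relation E on ℤ² such that E((m,l),(n,k)) implies E(g·(m,l), g·(n,k)) for all g ∈ SL(2,ℤ), and ∼ is the intersection of all congruence relations with properties (i) and (ii).) Then for every integer n ∈ ℤ, (m,l) ∼ (m',l') implies (nm,nl) ∼ (nm',nl'). -/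
/-- The action of `SL(2,ℤ)` on the lattice `ℤ²` by matrix–vector multiplication. -/
def matAct (g : Matrix.SpecialLinearGroup (Fin 2) ℤ) (v : ℤ × ℤ) : ℤ × ℤ :=
  (g 0 0 * v.1 + g 0 1 * v.2, g 1 0 * v.1 + g 1 1 * v.2)

/-- A congruence relation on the lattice `ℤ²`: an equivalence relation `E` such that
`g·(m,l)` and `g·(n,k)` are equivalent whenever `(m,l)` and `(n,k)` are, for all
`g ∈ SL(2,ℤ)`. -/
def IsCongruenceRel (E : ℤ × ℤ → ℤ × ℤ → Prop) : Prop :=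
  Equivalence E ∧
    ∀ (g : Matrix.SpecialLinearGroup (Fin 2) ℤ) (v w : ℤ × ℤ), E v w → E (matAct g v) (matAct g w)

/-- The two defining properties of the relation `∼`:
(i) `(m,l) ∼ 𝔱^N·(m,l)`;
(ii) `(m,l) ∼ (m,kl)` whenever `k ≡ 1 (mod N)` and `gcd(m,kl) = gcd(m,l)`. -/
def SatisfiesDefProps (N : ℕ) (E : ℤ × ℤ → ℤ × ℤ → Prop) : Prop :=
  (∀ v : ℤ × ℤ, E v (matAct (ModularGroup.T ^ N) v)) ∧
    (∀ m l k : ℤ, Int.ModEq (N : ℤ) k 1 → Int.gcd m (k * l) = Int.gcd m l →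
      E (m, l) (m, k * l))

/-- The smallest congruence relation `∼` with the two defining properties, i.e. the
intersection of all congruence relations having them. -/
def simRel (N : ℕ) (v w : ℤ × ℤ) : Prop :=
  ∀ E : ℤ × ℤ → ℤ × ℤ → Prop, IsCongruenceRel E → SatisfiesDefProps N E → E v w

/-! Multiplication by `n` commutes with `SL(2,ℤ)` and multiplies gcds by `|n|`, so the pullback
along it of any congruence relation with the two defining properties is again one, and hence
contains `∼`. -/

theorem matAct_smul (g : Matrix.SpecialLinearGroup (Fin 2) ℤ) (n : ℤ) (v : ℤ × ℤ) :
    matAct g (n • v) = n • matAct g v := by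
  ext <;> simp only [matAct, Prod.smul_fst, Prod.smul_snd, smul_eq_mul] <;> ring

theorem IsCongruenceRel.onFun {E : ℤ × ℤ → ℤ × ℤ → Prop} (hE : IsCongruenceRel E)
    {f : ℤ × ℤ → ℤ × ℤ} (hf : ∀ g, Function.Commute f (matAct g)) :
    IsCongruenceRel (Function.onFun E f) := by
  refine ⟨hE.1.comap f, fun g v w hvw ↦ ?_⟩
  simpa only [Function.onFun, (hf g).eq] using hE.2 g _ _ hvw

theorem SatisfiesDefProps.onFun_smul {N : ℕ} {E : ℤ × ℤ → ℤ × ℤ → Prop}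
    (hE : SatisfiesDefProps N E) (n : ℤ) :
    SatisfiesDefProps N (Function.onFun E (n • ·)) := by
  refine ⟨fun v ↦ ?_, fun m l k hk hgcd ↦ ?_⟩
  · simpa only [Function.onFun, matAct_smul] using hE.1 (n • v)
  · have hgcd_smul : Int.gcd (n * m) (k * (n * l)) = Int.gcd (n * m) (n * l) := by
      rw [mul_left_comm, Int.gcd_mul_left, Int.gcd_mul_left, hgcd]
    simpa only [Function.onFun, Prod.smul_mk, smul_eq_mul, mul_left_comm n k l] using
      hE.2 (n * m) (n * l) k hk hgcd_smul

/-- For every integer `n`, if `(m,l) ∼ (m',l')` then `(nm,nl) ∼ (nm',nl')`. -/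
theorem simRel_smul (N : ℕ) (hN : 0 < N) (n m l m' l' : ℤ)
    (h : simRel N (m, l) (m', l')) :
    simRel N (n * m, n * l) (n * m', n * l') := by
  intro E hE hprops
  have hcomm (g) : Function.Commute (n • ·) (matAct g) := fun v ↦ (matAct_smul g n v).symm
  exact h (Function.onFun E (n • ·)) (hE.onFun hcomm) (hprops.onFun_smul n)
end

section
/- Fix a positive integer N and let ∼ denote the smallest congruence relation on ℤ² satisfying: (i) (m,l) ∼ 𝔱^N·(m,l) for all (m,l), where 𝔱 = (1 1; 0 1); and (ii) (m,l) ∼ (m,kl) for every k ∈ ℤ with k ≡ 1 (mod N) and gcd(m,kl) = gcd(m,l). Then two lattice points (m,l) and (m',l') are in the same Γ(N)-orbit if and only if (m,l) ∼ (m',l'). -/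
/-!
By minimality of `∼`, the forward implication says that `Γ(N)` acts trivially on `ℤ²/E` for every
congruence relation `E` with properties (i) and (ii), and the converse says that the `Γ(N)`-orbit
relation is itself such an `E`.

For the former, normality of `Γ(N)` and the transitivity of `SL(2,ℤ)` on primitive vectors reduce
everything to a vector `(0, d)`. If `(b, e)` is the second column of `g ∈ Γ(N)`, then `N ∣ b`, so
(i) gives `(0, d) ∼ (bd, d)`, and `b`, `e` are coprime with `e ≡ 1 (mod N)`, so (ii) gives
`(bd, d) ∼ (bd, ed)`.

For the latter, the point is that primitive vectors congruent mod `N` lie in one `Γ(N)`-orbit; once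
the gcd is divided out, the two sides of (ii) are such a pair.
-/

open CongruenceSubgroup Matrix.SpecialLinearGroup

open scoped MatrixGroups

theorem mul_apply_fin_two {R : Type*} [CommRing R] (g h : SL(2, R)) (i j : Fin 2) :
    (g * h) i j = g i 0 * h 0 j + g i 1 * h 1 j := by
  rw [coe_mul, Matrix.mul_apply, Fin.sum_univ_two]

theorem inv_mul_apply_zero_one {R : Type*} [CommRing R] (g h : SL(2, R)) :
    (g⁻¹ * h) 0 1 = g 1 1 * h 0 1 - g 0 1 * h 1 1 := by
  rw [mul_apply_fin_two, SL2_inv_expl]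
  simp [sub_eq_add_neg]

theorem inv_mul_apply_one_one {R : Type*} [CommRing R] (g h : SL(2, R)) :
    (g⁻¹ * h) 1 1 = g 0 0 * h 1 1 - g 1 0 * h 0 1 := by
  rw [mul_apply_fin_two, SL2_inv_expl]
  simp [neg_add_eq_sub]

theorem intCast_det_fin_two (R : Type*) [CommRing R] (g : SL(2, ℤ)) :
    (g 0 0 * g 1 1 - g 0 1 * g 1 0 : R) = 1 := by
  exact_mod_cast congrArg (Int.cast : ℤ → R) ((Matrix.det_fin_two g.1).symm.trans g.2)

theorem exists_eq_smul_isCoprime {R : Type*} [CommRing R] [IsDomain R] [IsBezout R] [GCDMonoid R]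
    (v : R × R) : ∃ d a b : R, IsCoprime a b ∧ v = d • (a, b) := by
  obtain ⟨a, b, ha, hb, hab⟩ := extract_gcd v.1 v.2
  exact ⟨gcd v.1 v.2, a, b, (gcd_isUnit_iff a b).1 hab, Prod.ext ha hb⟩

theorem matAct_mul (g h : SL(2, ℤ)) (v : ℤ × ℤ) : matAct (g * h) v = matAct g (matAct h v) := by
  ext <;> simp only [matAct, mul_apply_fin_two] <;> ring

theorem matAct_one (v : ℤ × ℤ) : matAct 1 v = v := by
  simp [matAct]

theorem matAct_inv_matAct (g : SL(2, ℤ)) (v : ℤ × ℤ) : matAct g⁻¹ (matAct g v) = v := by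
  rw [← matAct_mul, inv_mul_cancel, matAct_one]

theorem matAct_matAct_inv (g : SL(2, ℤ)) (v : ℤ × ℤ) : matAct g (matAct g⁻¹ v) = v := by
  rw [← matAct_mul, mul_inv_cancel, matAct_one]

theorem matAct_smul_s4 (g : SL(2, ℤ)) (c : ℤ) (v : ℤ × ℤ) : matAct g (c • v) = c • matAct g v := by
  ext <;> simp only [matAct, Prod.smul_fst, Prod.smul_snd, smul_eq_mul] <;> ring

theorem matAct_zero_left (g : SL(2, ℤ)) (d : ℤ) : matAct g (0, d) = (g 0 1 * d, g 1 1 * d) := by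
  simp [matAct]

theorem matAct_T_zpow (n : ℤ) (v : ℤ × ℤ) :
    matAct (ModularGroup.T ^ n) v = (v.1 + n * v.2, v.2) := by
  simp [matAct, ModularGroup.coe_T_zpow]

theorem exists_matAct_zero_left_eq (v : ℤ × ℤ) :
    ∃ (g : SL(2, ℤ)) (d : ℤ), matAct g (0, d) = v := by
  obtain ⟨d, a, b, hab, rfl⟩ := exists_eq_smul_isCoprime v
  obtain ⟨g, rfl, rfl⟩ := hab.exists_SL2_col 1
  exact ⟨g, d, by rw [matAct_zero_left, Prod.smul_mk, smul_eq_mul, smul_eq_mul, mul_comm d,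
    mul_comm d]⟩

section Orbits

/-- The `Γ(N)`-orbit relation on `ℤ²`. -/
def gammaOrbitRel (N : ℕ) (v w : ℤ × ℤ) : Prop :=
  ∃ g ∈ Gamma N, matAct g v = w

variable {N : ℕ}

theorem isCongruenceRel_gammaOrbitRel (N : ℕ) : IsCongruenceRel (gammaOrbitRel N) := by
  refine ⟨⟨fun v => ⟨1, one_mem _, matAct_one v⟩, ?symm, ?trans⟩, ?matAct⟩
  case symm =>
    rintro v _ ⟨g, hg, rfl⟩
    exact ⟨g⁻¹, inv_mem hg, matAct_inv_matAct g v⟩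
  case trans =>
    rintro v _ _ ⟨g, hg, rfl⟩ ⟨h, hh, rfl⟩
    exact ⟨h * g, mul_mem hh hg, matAct_mul h g v⟩
  case matAct =>
    rintro g v _ ⟨h, hh, rfl⟩
    refine ⟨g * h * g⁻¹, (Gamma_normal N).conj_mem h hh g, ?_⟩
    rw [matAct_mul, matAct_inv_matAct, matAct_mul]

theorem gammaOrbitRel.smul {v w : ℤ × ℤ} (h : gammaOrbitRel N v w) (c : ℤ) :
    gammaOrbitRel N (c • v) (c • w) := by
  obtain ⟨g, hg, rfl⟩ := h
  exact ⟨g, hg, matAct_smul_s4 g c v⟩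

theorem gammaOrbitRel_zero_one_matAct {g : SL(2, ℤ)} (h01 : (g 0 1 : ZMod N) = 0)
    (h11 : (g 1 1 : ZMod N) = 1) : gammaOrbitRel N (0, 1) (matAct g (0, 1)) := by
  -- Subtracting `g 1 0` times the second column of `g` from the first moves `g` into `Γ(N)`.
  let s : SL(2, ℤ) := ⟨!![1, 0; -g 1 0, 1], by simp⟩
  have hs : matAct s (0, 1) = (0, 1) := by simp [s, matAct]
  have h00 : (g 0 0 : ZMod N) = 1 := by simpa [h01, h11] using intCast_det_fin_two (ZMod N) g
  refine ⟨g * s, ?_, by rw [matAct_mul, hs]⟩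
  simp only [Gamma_mem, mul_apply_fin_two]
  simp [s, h00, h01, h11]

theorem gammaOrbitRel_of_isCoprime {a b a' b' : ℤ} (hab : IsCoprime a b) (hab' : IsCoprime a' b')
    (ha : (a : ZMod N) = a') (hb : (b : ZMod N) = b') : gammaOrbitRel N (a, b) (a', b') := by
  obtain ⟨g, rfl, rfl⟩ := hab.exists_SL2_col 1
  obtain ⟨g', rfl, rfl⟩ := hab'.exists_SL2_col 1
  have h01 : (((g⁻¹ * g') 0 1 : ℤ) : ZMod N) = 0 := by
    rw [inv_mul_apply_zero_one]
    push_cast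
    linear_combination g 0 1 * hb - g 1 1 * ha
  have h11 : (((g⁻¹ * g') 1 1 : ℤ) : ZMod N) = 1 := by
    rw [inv_mul_apply_one_one]
    push_cast
    linear_combination intCast_det_fin_two (ZMod N) g + g 1 0 * ha - g 0 0 * hb
  have h := (isCongruenceRel_gammaOrbitRel N).2 g _ _ (gammaOrbitRel_zero_one_matAct h01 h11)
  rw [matAct_mul, matAct_matAct_inv] at h
  simpa only [matAct_zero_left, mul_one] using h

theorem gammaOrbitRel_mul_snd {m l k : ℤ} (hk : k ≡ 1 [ZMOD N])
    (hgcd : Int.gcd m (k * l) = Int.gcd m l) : gammaOrbitRel N (m, l) (m, k * l) := by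
  obtain ⟨d, a, b, hab, hml⟩ := exists_eq_smul_isCoprime (m, l)
  obtain ⟨rfl, rfl⟩ : m = d * a ∧ l = d * b := Prod.ext_iff.1 hml
  rcases eq_or_ne d 0 with rfl | hd
  · simpa using (isCongruenceRel_gammaOrbitRel N).1.refl (0, 0)
  rw [mul_left_comm] at hgcd ⊢
  have hakb : IsCoprime a (k * b) := by
    rw [Int.gcd_mul_left, Int.gcd_mul_left] at hgcd
    rw [Int.isCoprime_iff_gcd_eq_one] at hab ⊢
    rw [← hab]
    exact Nat.eq_of_mul_eq_mul_left (Int.natAbs_pos.2 hd) hgcd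
  have hk' : (k : ZMod N) = 1 := by
    simpa using (ZMod.intCast_eq_intCast_iff k 1 N).2 hk
  exact (gammaOrbitRel_of_isCoprime hab hakb rfl (by simp [hk'])).smul d

theorem satisfiesDefProps_gammaOrbitRel (N : ℕ) : SatisfiesDefProps N (gammaOrbitRel N) :=
  ⟨fun _ => ⟨ModularGroup.T ^ N, by simpa using ModularGroup_T_pow_mem_Gamma N N dvd_rfl, rfl⟩,
    fun _ _ _ hk hgcd => gammaOrbitRel_mul_snd hk hgcd⟩

end Orbits

namespace IsCongruenceRel

variable {E : ℤ × ℤ → ℤ × ℤ → Prop}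

/-- The kernel of the action of `SL(2,ℤ)` on the quotient `ℤ²/E` by a congruence relation `E`. -/
def kernel (hE : IsCongruenceRel E) : Subgroup SL(2, ℤ) where
  carrier := {g | ∀ v, E v (matAct g v)}
  one_mem' v := by simpa only [matAct_one] using hE.1.refl v
  mul_mem' {g h} hg hh v := by
    rw [matAct_mul]
    exact hE.1.trans (hh v) (hg _)
  inv_mem' {g} hg v := by
    simpa only [matAct_matAct_inv] using hE.1.symm (hg (matAct g⁻¹ v))

variable {N : ℕ}

theorem rel_zero_left_matAct (hE : IsCongruenceRel E) (hEN : SatisfiesDefProps N E) {g : SL(2, ℤ)}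
    (hg : g ∈ Gamma N) (d : ℤ) : E (0, d) (matAct g (0, d)) := by
  obtain ⟨-, h01, -, h11⟩ := Gamma_mem.1 hg
  have hshear : E (0, d) (g 0 1 * d, d) := by
    obtain ⟨j, hj⟩ := (ZMod.intCast_zmod_eq_zero_iff_dvd _ N).1 h01
    have hT : ModularGroup.T ^ (N * j) ∈ hE.kernel := by
      rw [zpow_mul, zpow_natCast]
      exact zpow_mem (show ModularGroup.T ^ N ∈ hE.kernel from hEN.1) j
    simpa [matAct_T_zpow, hj] using hT (0, d)
  have hscale : E (g 0 1 * d, d) (g 0 1 * d, g 1 1 * d) := by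
    refine hEN.2 _ _ _ ((ZMod.intCast_eq_intCast_iff _ _ N).1 (by simpa using h11)) ?_
    rw [Int.gcd_mul_right, Int.isCoprime_iff_gcd_eq_one.1 (g.isCoprime_col 1), one_mul,
      Int.gcd_mul_left_left]
  rw [matAct_zero_left]
  exact hE.1.trans hshear hscale

theorem gamma_le_kernel (hE : IsCongruenceRel E) (hEN : SatisfiesDefProps N E) :
    Gamma N ≤ hE.kernel := by
  intro g hg v
  obtain ⟨h, d, rfl⟩ := exists_matAct_zero_left_eq v
  have hconj : h⁻¹ * g * h ∈ Gamma N := by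
    simpa only [inv_inv] using (Gamma_normal N).conj_mem g hg h⁻¹
  have hrel := hE.2 h _ _ (hE.rel_zero_left_matAct hEN hconj d)
  rwa [← matAct_mul, ← mul_assoc, mul_inv_cancel_left, matAct_mul] at hrel

end IsCongruenceRel

/-- Two lattice points `(m,l)` and `(m',l')` are in the same `Γ(N)`-orbit
if and only if `(m,l) ∼ (m',l')`. -/
theorem gamma_orbit_iff_simRel (N : ℕ) (hN : 0 < N) (m l m' l' : ℤ) :
    (∃ g ∈ CongruenceSubgroup.Gamma N, matAct g (m, l) = (m', l')) ↔
      simRel N (m, l) (m', l') := by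
  constructor
  · rintro ⟨g, hg, hgv⟩ E hE hEN
    exact hgv ▸ hE.gamma_le_kernel hEN hg (m, l)
  · intro h
    exact h _ (isCongruenceRel_gammaOrbitRel N) (satisfiesDefProps_gammaOrbitRel N)
end

section
/- Let N be a positive integer, let ℚ(ζ_N) ⊆ ℂ be the N-th cyclotomic field, and let a be a nonzero element of ℚ(ζ_N). For q ∈ ℤ define j(q) := σ_q(a)/a if gcd(q,N) = 1, where σ_q ∈ Gal(ℚ(ζ_N)/ℚ) is the automorphism sending every N-th root of unity ζ to ζ^q, and j(q) := 0 if gcd(q,N) ≠ 1. Then the following are equivalent: (1) j(qq') = j(q)·j(q') for all q, q' ∈ ℤ; (2) j(q) ∈ ℚ for all q ∈ ℤ. Moreover, if these conditions hold, then j(q) ∈ {0, 1, −1} for all q ∈ ℤ. -/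
/-!
The symbol satisfies the cocycle equation `j (q * q') = j q * σ_q (j q')`, so comparing it with
multiplicativity and cancelling `j q` shows that multiplicativity means invariance of every `j q'`
under every `σ_q`. The `σ_q` exhaust the Galois group, so the invariant values are the rational
ones. Finally, if `σ_q a = r • a` with `r` rational, then taking norms yields `r ^ [K : ℚ] = 1`,
whence `r = ±1`.
-/

section Automorphisms

theorem algEquiv_eq_of_adjoin_singleton_eq_top {R A B : Type*} [CommSemiring R] [Semiring A]
    [Semiring B] [Algebra R A] [Algebra R B] {x : A} (hx : Algebra.adjoin R {x} = ⊤)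
    {f g : A ≃ₐ[R] B} (h : f x = g x) : f = g :=
  AlgEquiv.coe_toAlgHom_injective <|
    AlgHom.ext_of_adjoin_eq_top hx fun _ hy ↦ Set.mem_singleton_iff.1 hy ▸ h

theorem algEquiv_mul_eq_of_apply_eq_zpow {R K : Type*} [CommSemiring R] [DivisionRing K]
    [Algebra R K] {x : K} (hx : Algebra.adjoin R {x} = ⊤) {f g h : K ≃ₐ[R] K} {m n : ℤ}
    (hf : f x = x ^ m) (hg : g x = x ^ n) (hh : h x = x ^ (m * n)) : h = f * g :=
  algEquiv_eq_of_adjoin_singleton_eq_top hx <| by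
    rw [AlgEquiv.mul_apply, hg, map_zpow₀, hf, hh, zpow_mul]

theorem exists_gcd_eq_one_and_eq_of_apply_eq_zpow {R K : Type*} [CommSemiring R] [Field K]
    [Algebra R K] {N : ℕ} [NeZero N] {ζ : K} (hζ : IsPrimitiveRoot ζ N)
    (hgen : Algebra.adjoin R {ζ} = ⊤) {σ : ℤ → K ≃ₐ[R] K}
    (hσ : ∀ q : ℤ, Int.gcd q N = 1 → σ q ζ = ζ ^ q) (τ : K ≃ₐ[R] K) :
    ∃ q : ℤ, Int.gcd q N = 1 ∧ σ q = τ := by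
  obtain ⟨n, -, hn, hτ⟩ := hζ.isPrimitiveRoot_iff.1 (hζ.map_of_injective τ.injective)
  have hn' : Int.gcd n N = 1 := by rwa [Int.gcd_natCast_natCast]
  refine ⟨n, hn', algEquiv_eq_of_adjoin_singleton_eq_top hgen ?_⟩
  rw [hσ n hn', zpow_natCast, hτ]

variable {R S : Type*} [CommRing R] [CommRing S] [Algebra R S]

theorem isCyclotomicExtension_of_adjoin_singleton_eq_top {N : ℕ} [NeZero N] {ζ : S}
    (hζ : IsPrimitiveRoot ζ N) (hgen : Algebra.adjoin R {ζ} = ⊤) :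
    IsCyclotomicExtension {N} R S :=
  have := hζ.adjoin_isCyclotomicExtension R
  .equiv {N} R _ ((Subalgebra.equivOfEq _ _ hgen).trans Subalgebra.topEquiv)

variable [IsDomain S] [Module.Free R S] [Module.Finite R S]

theorem pow_finrank_eq_one_of_algEquiv_apply_eq_smul [IsDomain R] {τ : S ≃ₐ[R] S} {x : S}
    (hx : x ≠ 0) {r : R} (h : τ x = r • x) : r ^ Module.finrank R S = 1 := by
  have hnorm : r ^ Module.finrank R S * Algebra.norm R x = Algebra.norm R x := by
    rw [← Algebra.norm_algebraMap, ← map_mul, ← Algebra.smul_def, ← h,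
      Algebra.norm_eq_of_algEquiv]
  exact (mul_eq_right₀ (Algebra.norm_ne_zero_iff.2 hx)).1 hnorm

theorem eq_one_or_eq_neg_one_of_algEquiv_apply_eq_smul [LinearOrder R] [IsStrictOrderedRing R]
    {τ : S ≃ₐ[R] S} {x : S} (hx : x ≠ 0) {r : R} (h : τ x = r • x) : r = 1 ∨ r = -1 := by
  rcases pow_eq_one_iff_cases.1 (pow_finrank_eq_one_of_algEquiv_apply_eq_smul hx h) with
    hzero | hone | ⟨hneg, -⟩
  · exact absurd hzero Module.finrank_pos.ne'
  · exact .inl hone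
  · exact .inr hneg

end Automorphisms

/-- The abstract Hopf symbol `j` attached to `a`, for a family `σ` of automorphisms in which `σ q`
stands for the one raising `N`-th roots of unity to the power `q`. The values of `σ` at integers
not coprime to `N` are ignored. -/
def galoisSymbol {R K : Type*} [CommSemiring R] [Field K] [Algebra R K] (N : ℕ)
    (σ : ℤ → K ≃ₐ[R] K) (a : K) (q : ℤ) : K :=
  if Int.gcd q N = 1 then σ q a / a else 0

namespace galoisSymbol

section Basic

variable {R K : Type*} [CommSemiring R] [Field K] [Algebra R K] {N : ℕ} {σ : ℤ → K ≃ₐ[R] K}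
  {a : K} {q : ℤ}

theorem of_gcd_eq_one (hq : Int.gcd q N = 1) : galoisSymbol N σ a q = σ q a / a :=
  if_pos hq

theorem of_gcd_ne_one (hq : Int.gcd q N ≠ 1) : galoisSymbol N σ a q = 0 :=
  if_neg hq

theorem ne_zero (ha : a ≠ 0) (hq : Int.gcd q N = 1) : galoisSymbol N σ a q ≠ 0 := by
  rw [of_gcd_eq_one hq]
  exact div_ne_zero ((map_ne_zero (σ q)).2 ha) ha

theorem mul_eq_mul_apply {ζ : K} (hgen : Algebra.adjoin R {ζ} = ⊤)
    (hσ : ∀ q : ℤ, Int.gcd q N = 1 → σ q ζ = ζ ^ q) (ha : a ≠ 0) (q q' : ℤ) :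
    galoisSymbol N σ a (q * q') = galoisSymbol N σ a q * σ q (galoisSymbol N σ a q') := by
  have hcop : Int.gcd (q * q') N = 1 ↔ Int.gcd q N = 1 ∧ Int.gcd q' N = 1 := by
    simp only [← Int.isCoprime_iff_gcd_eq_one, IsCoprime.mul_left_iff]
  by_cases hq : Int.gcd q N = 1
  · by_cases hq' : Int.gcd q' N = 1
    · have hqq' := hcop.2 ⟨hq, hq'⟩
      have hmul : σ (q * q') = σ q * σ q' :=
        algEquiv_mul_eq_of_apply_eq_zpow hgen (hσ q hq) (hσ q' hq') (hσ _ hqq')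
      have hσa : σ q a ≠ 0 := (map_ne_zero (σ q)).2 ha
      rw [of_gcd_eq_one hqq', of_gcd_eq_one hq, of_gcd_eq_one hq', hmul, AlgEquiv.mul_apply,
        map_div₀, mul_comm, div_mul_div_cancel₀ hσa]
    · rw [of_gcd_ne_one hq', of_gcd_ne_one fun h ↦ hq' (hcop.1 h).2, map_zero, mul_zero]
  · rw [of_gcd_ne_one hq, of_gcd_ne_one fun h ↦ hq (hcop.1 h).1, zero_mul]

end Basic

variable {F K : Type*} [Field F] [Field K] [Algebra F K] {N : ℕ} {σ : ℤ → K ≃ₐ[F] K} {a : K}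

theorem forall_mul_iff_forall_exists_algebraMap [NeZero N] {ζ : K}
    (hζ : IsPrimitiveRoot ζ N) (hgen : Algebra.adjoin F {ζ} = ⊤)
    (hσ : ∀ q : ℤ, Int.gcd q N = 1 → σ q ζ = ζ ^ q) (ha : a ≠ 0) :
    (∀ q q' : ℤ, galoisSymbol N σ a (q * q') = galoisSymbol N σ a q * galoisSymbol N σ a q') ↔
      ∀ q : ℤ, ∃ r : F, galoisSymbol N σ a q = algebraMap F K r := by
  have hcocycle := mul_eq_mul_apply hgen hσ ha
  constructor
  · intro hmul q
    have hfixed (τ : K ≃ₐ[F] K) : τ (galoisSymbol N σ a q) = galoisSymbol N σ a q := by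
      obtain ⟨p, hp, rfl⟩ := exists_gcd_eq_one_and_eq_of_apply_eq_zpow hζ hgen hσ τ
      exact mul_left_cancel₀ (ne_zero ha hp) ((hcocycle p q).symm.trans (hmul p q))
    have := isCyclotomicExtension_of_adjoin_singleton_eq_top hζ hgen
    have := IsCyclotomicExtension.isGalois {N} F K
    obtain ⟨r, hr⟩ := (InfiniteGalois.mem_range_algebraMap_iff_fixed _).2 hfixed
    exact ⟨r, hr.symm⟩
  · intro hbase q q'
    obtain ⟨r, hr⟩ := hbase q'
    rw [hcocycle, hr, AlgEquiv.commutes]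

theorem eq_zero_or_eq_one_or_eq_neg_one [LinearOrder F] [IsStrictOrderedRing F]
    [FiniteDimensional F K] (ha : a ≠ 0) {q : ℤ} {r : F}
    (hr : galoisSymbol N σ a q = algebraMap F K r) :
    galoisSymbol N σ a q = 0 ∨ galoisSymbol N σ a q = 1 ∨ galoisSymbol N σ a q = -1 := by
  by_cases hq : Int.gcd q N = 1
  · have heigen : σ q a = r • a := by
      rw [Algebra.smul_def, ← hr, of_gcd_eq_one hq, div_mul_cancel₀ _ ha]
    rcases eq_one_or_eq_neg_one_of_algEquiv_apply_eq_smul ha heigen with rfl | rfl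
    · exact .inr (.inl (by rw [hr, map_one]))
    · exact .inr (.inr (by rw [hr, map_neg, map_one]))
  · exact .inl (of_gcd_ne_one hq)

end galoisSymbol

theorem hopf_symbol_dirichlet_iff_rational_general {F K : Type*} [Field F] [LinearOrder F]
    [IsStrictOrderedRing F] [Field K] [Algebra F K] {N : ℕ} [NeZero N] {ζ : K}
    (hζ : IsPrimitiveRoot ζ N) (hgen : Algebra.adjoin F {ζ} = ⊤) {σ : ℤ → K ≃ₐ[F] K}
    (hσ : ∀ q : ℤ, Int.gcd q N = 1 → σ q ζ = ζ ^ q) {a : K} (ha : a ≠ 0) :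
    ((∀ q q' : ℤ, galoisSymbol N σ a (q * q') = galoisSymbol N σ a q * galoisSymbol N σ a q') ↔
        ∀ q : ℤ, ∃ r : F, galoisSymbol N σ a q = algebraMap F K r) ∧
      ((∀ q q' : ℤ, galoisSymbol N σ a (q * q') = galoisSymbol N σ a q * galoisSymbol N σ a q') →
        ∀ q : ℤ, galoisSymbol N σ a q = 0 ∨ galoisSymbol N σ a q = 1 ∨
          galoisSymbol N σ a q = -1) := by
  have := isCyclotomicExtension_of_adjoin_singleton_eq_top hζ hgen
  have := IsCyclotomicExtension.finiteDimensional {N} F K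
  have hiff := galoisSymbol.forall_mul_iff_forall_exists_algebraMap hζ hgen hσ ha
  refine ⟨hiff, fun hmul q ↦ ?_⟩
  obtain ⟨r, hr⟩ := hiff.1 hmul q
  exact galoisSymbol.eq_zero_or_eq_one_or_eq_neg_one ha hr

/-- Let `K = ℚ(ζ_N)` be the `N`-th cyclotomic field (a field generated over `ℚ`
by a primitive `N`-th root of unity `ζ`), let `a ∈ K` be nonzero, and let `σ_q` be the Galois
automorphism sending every `N`-th root of unity to its `q`-th power (for `gcd(q,N) = 1`).
Define `j(q) := σ_q(a)/a` if `gcd(q,N) = 1` and `j(q) := 0` otherwise. Then `j` is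
multiplicative (a Dirichlet character) if and only if all values `j(q)` are rational;
moreover, in that case `j(q) ∈ {0, 1, −1}` for all `q`. -/
theorem hopf_symbol_dirichlet_iff_rational (N : ℕ) (hN : 0 < N)
    (K : Type) [Field K] [Algebra ℚ K]
    (ζ : K) (hζ : IsPrimitiveRoot ζ N) (hgen : Algebra.adjoin ℚ {ζ} = ⊤)
    (σ : ℤ → (K ≃ₐ[ℚ] K))
    (hσ : ∀ q : ℤ, Int.gcd q N = 1 → ∀ x : K, x ^ N = 1 → σ q x = x ^ q)
    (a : K) (ha : a ≠ 0)
    (j : ℤ → K)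
    (hj : ∀ q : ℤ, j q = if Int.gcd q N = 1 then σ q a / a else 0) :
    ((∀ q q' : ℤ, j (q * q') = j q * j q') ↔
        ∀ q : ℤ, ∃ r : ℚ, j q = algebraMap ℚ K r) ∧
      ((∀ q q' : ℤ, j (q * q') = j q * j q') →
        ∀ q : ℤ, j q = 0 ∨ j q = 1 ∨ j q = -1) := by
  obtain rfl : j = galoisSymbol N σ a := funext hj
  have : NeZero N := ⟨hN.ne'⟩
  exact hopf_symbol_dirichlet_iff_rational_general hζ hgen
    (fun q hq ↦ hσ q hq ζ hζ.pow_eq_one) ha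
end
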